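/- Multi-state estimate (Theorem 2.3): Let d ∈ {1,2,3} and N ≥ 1. Let s₁,…,s_N > 0 and unit vectors ξ⁽¹⁾,…,ξ⁽ᴺ⁾ ∈ ℝ^d satisfy Σⱼ sⱼ ξ⁽ʲ⁾ = 0. Let U⁽¹⁾,…,U⁽ᴺ⁾ ∈ 𝒢 with densities ρ⁽ʲ⁾, velocities v⁽ʲ⁾, magnetic fields B⁽ʲ⁾. For each j define α̂ⱼ = max{ ⟨ξ⁽ʲ⁾, v⁽ʲ⁾⟩ , (Σᵢ sᵢ)⁻¹ Σᵢ sᵢ ⟨ξ⁽ʲ⁾ − ξ⁽ⁱ⁾, (√ρ⁽ʲ⁾ v⁽ʲ⁾ + √ρ⁽ⁱ⁾ v⁽ⁱ⁾)/(√ρ⁽ʲ⁾ + √ρ⁽ⁱ⁾)⟩ } + 𝒞(U⁽ʲ⁾; ξ⁽ʲ⁾) + 2(Σᵢ sᵢ)⁻¹ Σᵢ sᵢ |B⁽ʲ⁾ − B⁽ⁱ⁾|/(√ρ⁽ʲ⁾ + √ρ⁽ⁱ⁾). Then for any reals αⱼ ≥ α̂ⱼ (j = 1,…,N) one has Σⱼ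 sⱼ αⱼ > 0, the state Ū = (Σⱼ sⱼ αⱼ)⁻¹ Σⱼ sⱼ (αⱼ U⁽ʲ⁾ − ⟨ξ⁽ʲ⁾, F(U⁽ʲ⁾)⟩) has positive density component, and for all v*, B* ∈ ℝ³: Ū·n* + |B*|²/2 ≥ −(v*·B*)·(Σⱼ sⱼ αⱼ)⁻¹ · Σⱼ sⱼ ⟨ξ⁽ʲ⁾, B⁽ʲ⁾⟩. Furthermore, if Σⱼ sⱼ ⟨ξ⁽ʲ⁾, B⁽ʲ⁾⟩ = 0 then Ū ∈ cl(𝒢*). -/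

import Mathlib

noncomputable section

open Finset

/-- An MHD state `U = (ρ, m, B, E)` viewed as a vector in `ℝ⁸`. -/
abbrev MHDState := Fin 8 → ℝ

namespace MHD

/-- Build a state from density, momentum, magnetic field, total energy. -/
def mk (ρ : ℝ) (m B : Fin 3 → ℝ) (E : ℝ) : MHDState :=
  ![ρ, m 0, m 1, m 2, B 0, B 1, B 2, E]

/-- Density component. -/
def dens (U : MHDState) : ℝ := U 0

/-- Momentum components. -/
def mom (U : MHDState) : Fin 3 → ℝ := ![U 1, U 2, U 3]

/-- Magnetic field components. -/
def magB (U : MHDState) : Fin 3 → ℝ := ![U 4, U 5, U 6]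

/-- Total energy component. -/
def toten (U : MHDState) : ℝ := U 7

/-- Euclidean dot product on `ℝ³`. -/
def dot3 (a b : Fin 3 → ℝ) : ℝ := ∑ k, a k * b k

/-- Squared Euclidean norm on `ℝ³`. -/
def sq3 (a : Fin 3 → ℝ) : ℝ := dot3 a a

/-- Euclidean norm on `ℝ³`. -/
def norm3 (a : Fin 3 → ℝ) : ℝ := Real.sqrt (sq3 a)

/-- Velocity `v = m / ρ`. -/
def vel (U : MHDState) : Fin 3 → ℝ := fun k => mom U k / dens U

/-- Internal energy `𝓔(U) = E − (|m|²/ρ + |B|²)/2`. -/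
def intE (U : MHDState) : ℝ := toten U - (sq3 (mom U) / dens U + sq3 (magB U)) / 2

/-- Specific internal energy `e = 𝓔(U)/ρ`. -/
def specE (U : MHDState) : ℝ := intE U / dens U

/-- The admissible state set `𝒢`. -/
def Gset : Set MHDState := {U | 0 < dens U ∧ 0 < intE U}

/-- The set `𝒢_ρ` of states with positive density. -/
def Grho : Set MHDState := {U | 0 < dens U}

/-- Euclidean dot product on `ℝ⁸`. -/
def dot8 (U V : MHDState) : ℝ := ∑ i, U i * V i

/-- The vector `n* = (|v*|²/2, −v*, −B*, 1)`. -/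
def nstar (vs Bs : Fin 3 → ℝ) : MHDState :=
  mk (sq3 vs / 2) (fun k => -vs k) (fun k => -Bs k) 1

/-- The set `𝒢*`. -/
def GstarSet : Set MHDState :=
  {U | 0 < dens U ∧ ∀ vs Bs : Fin 3 → ℝ, 0 < dot8 U (nstar vs Bs) + sq3 Bs / 2}

/-- Equation of state assumption: for `ρ > 0`, `e > 0 ↔ p(ρ,e) > 0`. -/
def IsEOS (pfun : ℝ → ℝ → ℝ) : Prop :=
  ∀ ρ e : ℝ, 0 < ρ → (0 < e ↔ 0 < pfun ρ e)

/-- Pressure of a state, via the equation of state. -/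
def pres (pfun : ℝ → ℝ → ℝ) (U : MHDState) : ℝ := pfun (dens U) (specE U)

/-- Total pressure `p + |B|²/2`. -/
def ptot (pfun : ℝ → ℝ → ℝ) (U : MHDState) : ℝ := pres pfun U + sq3 (magB U) / 2

/-- The `i`-th flux `F_i(U)`. -/
def flux (pfun : ℝ → ℝ → ℝ) (i : Fin 3) (U : MHDState) : MHDState :=
  mk (dens U * vel U i)
    (fun k => dens U * vel U i * vel U k - magB U i * magB U k
      + ptot pfun U * (if k = i then 1 else 0))
    (fun k => vel U i * magB U k - magB U i * vel U k)
    (vel U i * (toten U + ptot pfun U) - magB U i * dot3 (vel U) (magB U))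

/-- Directional inner product `⟨ξ, w⟩ = Σ_{k<d} ξ_k w_k` for `ξ ∈ ℝ^d`, `w ∈ ℝ³`, `d ≤ 3`. -/
def dirDot {d : ℕ} (hd : d ≤ 3) (ξ : Fin d → ℝ) (w : Fin 3 → ℝ) : ℝ :=
  ∑ k, ξ k * w (Fin.castLE hd k)

/-- Directional flux `⟨ξ, F(U)⟩ = Σ_{i<d} ξ_i F_i(U)`. -/
def dirFlux (pfun : ℝ → ℝ → ℝ) {d : ℕ} (hd : d ≤ 3) (ξ : Fin d → ℝ) (U : MHDState) :
    MHDState :=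
  ∑ i, ξ i • flux pfun (Fin.castLE hd i) U

/-- `ξ` is a unit vector. -/
def unitVec {d : ℕ} (ξ : Fin d → ℝ) : Prop := (∑ k, (ξ k) ^ 2) = 1

/-- `𝒞_s(U) = p / (ρ √(2e))`. -/
def soundC (pfun : ℝ → ℝ → ℝ) (U : MHDState) : ℝ :=
  pres pfun U / (dens U * Real.sqrt (2 * specE U))

/-- `𝒞(U; ξ)`. -/
def waveC (pfun : ℝ → ℝ → ℝ) {d : ℕ} (hd : d ≤ 3) (ξ : Fin d → ℝ) (U : MHDState) : ℝ :=
  Real.sqrt ((soundC pfun U ^ 2 + sq3 (magB U) / dens U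
    + Real.sqrt ((soundC pfun U ^ 2 + sq3 (magB U) / dens U) ^ 2
      - 4 * soundC pfun U ^ 2 * dirDot hd ξ (magB U) ^ 2 / dens U)) / 2)

/-- Roe-type averaged velocity `v̄ = (√ρ v + √ρ̃ ṽ)/(√ρ + √ρ̃)`. -/
def roeV (U Ut : MHDState) : Fin 3 → ℝ := fun k =>
  (Real.sqrt (dens U) * vel U k + Real.sqrt (dens Ut) * vel Ut k)
    / (Real.sqrt (dens U) + Real.sqrt (dens Ut))

/-- `α_r(U, Ũ; ξ)`. -/
def alphaR (pfun : ℝ → ℝ → ℝ) {d : ℕ} (hd : d ≤ 3) (ξ : Fin d → ℝ) (U Ut : MHDState) : ℝ :=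
  max (dirDot hd ξ (vel U)) (dirDot hd ξ (roeV U Ut)) + waveC pfun hd ξ U
    + norm3 (magB U - magB Ut) / (Real.sqrt (dens U) + Real.sqrt (dens Ut))

/-- `α_l(U, Ũ; ξ)`. -/
def alphaL (pfun : ℝ → ℝ → ℝ) {d : ℕ} (hd : d ≤ 3) (ξ : Fin d → ℝ) (U Ut : MHDState) : ℝ :=
  min (dirDot hd ξ (vel U)) (dirDot hd ξ (roeV U Ut)) - waveC pfun hd ξ U
    - norm3 (magB U - magB Ut) / (Real.sqrt (dens U) + Real.sqrt (dens Ut))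

/-- `α_⋆(U, Ũ; ξ)`. -/
def alphaS (pfun : ℝ → ℝ → ℝ) {d : ℕ} (hd : d ≤ 3) (ξ : Fin d → ℝ) (U Ut : MHDState) : ℝ :=
  max (|dirDot hd ξ (vel U)|) (|dirDot hd ξ (roeV U Ut)|) + waveC pfun hd ξ U
    + norm3 (magB U - magB Ut) / (Real.sqrt (dens U) + Real.sqrt (dens Ut))

/-- The vector `θ(U, v*, B*) = 2^{−1/2}(B − B*, √ρ(v − v*), √(2ρe)) ∈ ℝ⁷`. -/
def theta (U : MHDState) (vs Bs : Fin 3 → ℝ) : Fin 7 → ℝ :=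
  ![(magB U 0 - Bs 0) / Real.sqrt 2,
    (magB U 1 - Bs 1) / Real.sqrt 2,
    (magB U 2 - Bs 2) / Real.sqrt 2,
    Real.sqrt (dens U) * (vel U 0 - vs 0) / Real.sqrt 2,
    Real.sqrt (dens U) * (vel U 1 - vs 1) / Real.sqrt 2,
    Real.sqrt (dens U) * (vel U 2 - vs 2) / Real.sqrt 2,
    Real.sqrt (2 * intE U) / Real.sqrt 2]

/-- `|θ|²`. -/
def thetaSq (U : MHDState) (vs Bs : Fin 3 → ℝ) : ℝ := ∑ k, theta U vs Bs k ^ 2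

/-- Godunov–Powell source vector `S(U) = (0, B, v, v·B)`. -/
def source (U : MHDState) : MHDState := mk 0 (magB U) (vel U) (dot3 (vel U) (magB U))

/-- HLL numerical flux with clamped wave speeds `σm ≤ 0 ≤ σp`. -/
def hllFlux (pfun : ℝ → ℝ → ℝ) {d : ℕ} (hd : d ≤ 3) (ξ : Fin d → ℝ)
    (Um Up : MHDState) (σm σp : ℝ) : MHDState :=
  (σp - σm)⁻¹ • (σp • dirFlux pfun hd ξ Um - σm • dirFlux pfun hd ξ Up
    + (σm * σp) • (Up - Um))

/-- HLL intermediate state `H(U⁻, U⁺; ξ)`. -/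
def hllMid (pfun : ℝ → ℝ → ℝ) {d : ℕ} (hd : d ≤ 3) (ξ : Fin d → ℝ)
    (Um Up : MHDState) (σm σp : ℝ) : MHDState :=
  (σp - σm)⁻¹ • (σp • Up - dirFlux pfun hd ξ Up - σm • Um + dirFlux pfun hd ξ Um)

/-- The quantity `α̂_j` of Theorem 2.3. -/
def alphaHat (pfun : ℝ → ℝ → ℝ) {d : ℕ} (hd : d ≤ 3) {N : ℕ}
    (s : Fin N → ℝ) (ξ : Fin N → Fin d → ℝ) (U : Fin N → MHDState) (j : Fin N) : ℝ :=
  max (dirDot hd (ξ j) (vel (U j)))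
      ((∑ i, s i)⁻¹ * ∑ i, s i * dirDot hd (fun k => ξ j k - ξ i k) (roeV (U j) (U i)))
  + waveC pfun hd (ξ j) (U j)
  + 2 * (∑ i, s i)⁻¹ * ∑ i, s i *
      (norm3 (magB (U j) - magB (U i)) / (Real.sqrt (dens (U j)) + Real.sqrt (dens (U i))))

def d1le3 : (1 : ℕ) ≤ 3 := by omega
def d2le3 : (2 : ℕ) ≤ 3 := by omega

/-- In one dimension the direction `ξ = 1`. -/
def xi1 : Fin 1 → ℝ := fun _ => 1

/-!
Write `Θ = |θ(U, v*, B*)|²`. For an admissible state, `U · n* + |B*|²/2 = Θ`, and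
`⟨ξ, F(U)⟩ · n*` splits into transport by `⟨ξ, v⟩`, a quadratic form in `θ` bounded by
`𝒞(U; ξ) Θ`, the terms `⟨ξ, v*⟩ (|B - B*|² - |B*|²)/2`, and `⟨ξ, B⟩ (v* · B*)`. Since
`∑ⱼ sⱼ ξⱼ = 0`, after summation `⟨ξ, v*⟩` only enters through
`⟨ξⱼ - ξᵢ, v*⟩ (|Bⱼ - B*|² - |Bᵢ - B*|²)`; replacing `v*` by the Roe average of the pair costs
`2 |ξⱼ - ξᵢ| |Bⱼ - Bᵢ| (Θⱼ + Θᵢ) / (√ρⱼ + √ρᵢ)`, which is what `α̂ⱼ` accounts for.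
-/

open WithLp (toLp)
open scoped InnerProductSpace

section InnerProductSpace

variable {E : Type*} [NormedAddCommGroup E] [InnerProductSpace ℝ E]

theorem sq_inner_le_sq_norm {n : E} (hn : ‖n‖ ≤ 1) (x : E) : ⟪n, x⟫_ℝ ^ 2 ≤ ‖x‖ ^ 2 :=
  sq_le_sq.2 <| by
    simpa using (abs_real_inner_le_norm n x).trans (mul_le_of_le_one_left (norm_nonneg x) hn)

theorem inner_le_mul_of_norm_le {g z : E} {C r : ℝ} (hC : 0 ≤ C) (hg : ‖g‖ ≤ C * r) :
    ⟪g, z⟫_ℝ ≤ C * ((r ^ 2 + ‖z‖ ^ 2) / 2) :=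
  calc ⟪g, z⟫_ℝ ≤ ‖g‖ * ‖z‖ := real_inner_le_norm g z
    _ ≤ C * r * ‖z‖ := by gcongr
    _ = C * (r * ‖z‖) := mul_assoc C r ‖z‖
    _ ≤ C * ((r ^ 2 + ‖z‖ ^ 2) / 2) := by gcongr; linarith [two_mul_le_add_sq r ‖z‖]

theorem sq_norm_sub_sq_norm (x y : E) : ‖x‖ ^ 2 - ‖y‖ ^ 2 = ⟪x - y, x + y⟫_ℝ := by
  rw [inner_sub_left, inner_add_right, inner_add_right, real_inner_comm x y,
    real_inner_self_eq_norm_sq, real_inner_self_eq_norm_sq]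
  ring

theorem norm_add_mul_norm_add_le (u u' b b' : E) :
    ‖u + u'‖ * ‖b + b'‖ ≤ ‖u‖ ^ 2 + ‖u'‖ ^ 2 + (‖b‖ ^ 2 + ‖b'‖ ^ 2) := by
  linarith [two_mul_le_add_sq ‖u + u'‖ ‖b + b'‖, parallelogram_law_with_norm ℝ u u',
    parallelogram_law_with_norm ℝ b b', sq_nonneg ‖u - u'‖, sq_nonneg ‖b - b'‖]

theorem abs_inner_mul_sq_norm_sub_le (m u u' b b' : E) :
    |⟪m, u + u'⟫_ℝ * (‖b‖ ^ 2 - ‖b'‖ ^ 2)| ≤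
      ‖m‖ * ‖b - b'‖ * (‖u‖ ^ 2 + ‖u'‖ ^ 2 + (‖b‖ ^ 2 + ‖b'‖ ^ 2)) := by
  rw [abs_mul, sq_norm_sub_sq_norm]
  calc |⟪m, u + u'⟫_ℝ| * |⟪b - b', b + b'⟫_ℝ|
      ≤ ‖m‖ * ‖u + u'‖ * (‖b - b'‖ * ‖b + b'‖) := by
        gcongr <;> exact abs_real_inner_le_norm _ _
    _ = ‖m‖ * ‖b - b'‖ * (‖u + u'‖ * ‖b + b'‖) := by ring
    _ ≤ _ := by gcongr; exact norm_add_mul_norm_add_le u u' b b'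

/-- The fast magnetosonic speed in direction `n` for sound speed `c` and Alfvén velocity `A`
(`A = B/√ρ` for an MHD state): its square is the larger root of
`μ² - (c² + |A|²) μ + c² ⟨n, A⟩²`. -/
def fastSpeed (c : ℝ) (n A : E) : ℝ :=
  √((c ^ 2 + ‖A‖ ^ 2 + √((c ^ 2 + ‖A‖ ^ 2) ^ 2 - 4 * c ^ 2 * ⟪n, A⟫_ℝ ^ 2)) / 2)

theorem fastSpeed_nonneg (c : ℝ) (n A : E) : 0 ≤ fastSpeed c n A := Real.sqrt_nonneg _

theorem fastSpeed_pos {c : ℝ} (hc : c ≠ 0) (n A : E) : 0 < fastSpeed c n A :=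
  Real.sqrt_pos.2 (by positivity)

theorem sq_fastSpeed (c : ℝ) (n A : E) :
    fastSpeed c n A ^ 2 =
      (c ^ 2 + ‖A‖ ^ 2 + √((c ^ 2 + ‖A‖ ^ 2) ^ 2 - 4 * c ^ 2 * ⟪n, A⟫_ℝ ^ 2)) / 2 :=
  Real.sq_sqrt (by positivity)

theorem charpoly_nonneg_of_sq_fastSpeed_le {c μ : ℝ} {n A : E} (hμ : fastSpeed c n A ^ 2 ≤ μ) :
    0 ≤ μ ^ 2 - (c ^ 2 + ‖A‖ ^ 2) * μ + c ^ 2 * ⟪n, A⟫_ℝ ^ 2 := by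
  rw [sq_fastSpeed] at hμ
  have hroot := (Real.sqrt_le_iff.1 (show _ ≤ 2 * μ - (c ^ 2 + ‖A‖ ^ 2) by linarith)).2
  linarith

theorem sq_inner_le_sq_fastSpeed (c : ℝ) {n : E} (hn : ‖n‖ ≤ 1) (A : E) :
    ⟪n, A⟫_ℝ ^ 2 ≤ fastSpeed c n A ^ 2 := by
  have hdisc : (2 * ⟪n, A⟫_ℝ ^ 2 - (c ^ 2 + ‖A‖ ^ 2)) ^ 2 ≤
      (c ^ 2 + ‖A‖ ^ 2) ^ 2 - 4 * c ^ 2 * ⟪n, A⟫_ℝ ^ 2 := by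
    linarith [mul_le_mul_of_nonneg_left (sq_inner_le_sq_norm hn A) (sq_nonneg ⟪n, A⟫_ℝ)]
  rw [sq_fastSpeed]
  linarith [le_of_abs_le (Real.abs_le_sqrt hdisc)]

/-- Completing the square in `W` leaves a multiple of the characteristic polynomial, once
Cauchy–Schwarz is applied to `n` and `X = (μ - ⟨n, A⟩²) W + ⟨n, A⟩ ⟨n, W⟩ A`, for which
`⟨n, X⟩ = μ ⟨n, W⟩`. -/
theorem magnetosonic_form_le_of_charpoly_nonneg {c μ : ℝ} {n A : E} (hn : ‖n‖ ≤ 1)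
    (hμ : ⟪n, A⟫_ℝ ^ 2 < μ) (hchar : 0 ≤ μ ^ 2 - (c ^ 2 + ‖A‖ ^ 2) * μ + c ^ 2 * ⟪n, A⟫_ℝ ^ 2)
    (W : E) :
    (c * ⟪n, W⟫_ℝ) ^ 2 + ‖⟪n, W⟫_ℝ • A - ⟪n, A⟫_ℝ • W‖ ^ 2 ≤ μ * ‖W‖ ^ 2 := by
  set a := ⟪n, A⟫_ℝ with ha
  set w := ⟪n, W⟫_ℝ with hw
  set X := (μ - a ^ 2) • W + (a * w) • A with hX
  have hnX : ⟪n, X⟫_ℝ = μ * w := by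
    rw [hX, inner_add_right, real_inner_smul_right, real_inner_smul_right, ← ha, ← hw]
    ring
  have hcs : 0 ≤ ‖X‖ ^ 2 - (μ * w) ^ 2 := sub_nonneg.2 (hnX ▸ sq_inner_le_sq_norm hn X)
  have hsquare : (μ - a ^ 2) * (μ * ‖W‖ ^ 2 - ((c * w) ^ 2 + ‖w • A - a • W‖ ^ 2)) =
      ‖X‖ ^ 2 - (μ * w) ^ 2 + w ^ 2 * (μ ^ 2 - (c ^ 2 + ‖A‖ ^ 2) * μ + c ^ 2 * a ^ 2) := by
    simp only [hX, norm_add_sq_real, norm_sub_sq_real, norm_smul, mul_pow, Real.norm_eq_abs,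
      sq_abs, real_inner_smul_left, real_inner_smul_right, real_inner_comm W A]
    ring
  exact sub_nonneg.1 (nonneg_of_mul_nonneg_right (hsquare ▸ by positivity) (sub_pos.2 hμ))

theorem magnetosonic_form_le (c : ℝ) {n : E} (hn : ‖n‖ ≤ 1) (A W : E) :
    (c * ⟪n, W⟫_ℝ) ^ 2 + ‖⟪n, W⟫_ℝ • A - ⟪n, A⟫_ℝ • W‖ ^ 2 ≤ fastSpeed c n A ^ 2 * ‖W‖ ^ 2 := by
  -- the square can only be completed for `μ > ⟨n, A⟩²`, hence the passage to the limit
  have hlim : ContinuousWithinAt (fun μ => μ * ‖W‖ ^ 2) (Set.Ioi (fastSpeed c n A ^ 2))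
      (fastSpeed c n A ^ 2) := by fun_prop
  refine ge_of_tendsto hlim ?_
  filter_upwards [self_mem_nhdsWithin] with μ (hμ : fastSpeed c n A ^ 2 < μ)
  exact magnetosonic_form_le_of_charpoly_nonneg hn
    ((sq_inner_le_sq_fastSpeed c hn A).trans_lt hμ) (charpoly_nonneg_of_sq_fastSpeed_le hμ.le) W

theorem magnetosonic_coupling_le (c : ℝ) {n : E} (hn : ‖n‖ ≤ 1) (A W : E) (y : ℝ) (b : E) :
    c * ⟪n, W⟫_ℝ * y + ⟪⟪n, W⟫_ℝ • A - ⟪n, A⟫_ℝ • W, b⟫_ℝ ≤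
      fastSpeed c n A * ((‖W‖ ^ 2 + (y ^ 2 + ‖b‖ ^ 2)) / 2) := by
  let g : WithLp 2 (ℝ × E) := toLp 2 (c * ⟪n, W⟫_ℝ, ⟪n, W⟫_ℝ • A - ⟪n, A⟫_ℝ • W)
  let z : WithLp 2 (ℝ × E) := toLp 2 (y, b)
  have hinner : ⟪g, z⟫_ℝ = c * ⟪n, W⟫_ℝ * y + ⟪⟪n, W⟫_ℝ • A - ⟪n, A⟫_ℝ • W, b⟫_ℝ := by
    simp [g, z, WithLp.prod_inner_apply, mul_comm]
  have hz : ‖z‖ ^ 2 = y ^ 2 + ‖b‖ ^ 2 := by simp [z, WithLp.prod_norm_sq_eq_of_L2]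
  have hg : ‖g‖ ≤ fastSpeed c n A * ‖W‖ := by
    refine le_of_sq_le_sq ?_ (mul_nonneg (fastSpeed_nonneg c n A) (norm_nonneg W))
    rw [WithLp.prod_norm_sq_eq_of_L2, mul_pow]
    simpa only [g, WithLp.toLp_fst, WithLp.toLp_snd, Real.norm_eq_abs, sq_abs] using
      magnetosonic_form_le c hn A W
  rw [← hinner, ← hz]
  exact inner_le_mul_of_norm_le (fastSpeed_nonneg c n A) hg

end InnerProductSpace

section WeightedAverages

variable {ι : Type*} [Fintype ι]

theorem sum_sum_nonneg_of_add_swap_nonneg {G : ι → ι → ℝ} (hG : ∀ j i, 0 ≤ G j i + G i j) :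
    0 ≤ ∑ j, ∑ i, G j i := by
  have hswap : ∑ j, ∑ i, (G j i + G i j) = 2 * ∑ j, ∑ i, G j i := by
    simp only [sum_add_distrib, two_mul, add_right_inj]
    exact sum_comm
  have : 0 ≤ ∑ j, ∑ i, (G j i + G i j) := sum_nonneg fun j _ => sum_nonneg fun i _ => hG j i
  linarith

theorem sum_mul_sum_eq_zero_of_antisymm (s : ι → ℝ) {R : ι → ι → ℝ} (hR : ∀ j i, R j i = -R i j) :
    ∑ j, s j * ∑ i, s i * R j i = 0 := by
  refine self_eq_neg.1 ?_
  simp only [mul_sum]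
  conv_lhs => rw [sum_comm]
  simp only [← sum_neg_distrib]
  refine sum_congr rfl fun j _ => sum_congr rfl fun i _ => ?_
  rw [hR i j]
  ring

theorem weighted_sum_nonneg_of_pairwise {s V Y Θ : ι → ℝ} {R β : ι → ι → ℝ} (hs : ∀ j, 0 ≤ s j)
    (hS : 0 < ∑ j, s j) (hV : ∑ j, s j * V j = 0) (hR : ∀ j i, R j i = -R i j)
    (hβ : ∀ j i, β j i = β i j)
    (h : ∀ j i, (V j - V i - R j i) * (Y j - Y i) ≤ 4 * β j i * (Θ j + Θ i)) :
    0 ≤ ∑ j, s j * (((∑ i, s i)⁻¹ * (∑ i, s i * R j i) - V j) * (Y j / 2)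
      + 2 * (∑ i, s i)⁻¹ * (∑ i, s i * β j i) * Θ j) := by
  set S := ∑ i, s i with hSdef
  have hsymm : 0 ≤ ∑ j, ∑ i, s j * s i * ((R j i - V j + V i) * Y j + 4 * β j i * Θ j) := by
    refine sum_sum_nonneg_of_add_swap_nonneg fun j i => ?_
    rw [hR i j, hβ i j]
    linarith [mul_le_mul_of_nonneg_left (h j i) (mul_nonneg (hs j) (hs i))]
  have hinner : ∀ j, ∑ i, s j * s i * ((R j i - V j + V i) * Y j + 4 * β j i * Θ j) =
      2 * S * (s j * ((S⁻¹ * (∑ i, s i * R j i) - V j) * (Y j / 2)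
        + 2 * S⁻¹ * (∑ i, s i * β j i) * Θ j)) := by
    intro j
    calc ∑ i, s j * s i * ((R j i - V j + V i) * Y j + 4 * β j i * Θ j)
        = s j * Y j * (∑ i, s i * R j i) - s j * V j * Y j * S + s j * Y j * (∑ i, s i * V i)
            + 4 * s j * Θ j * ∑ i, s i * β j i := by
          simp only [hSdef, mul_sum, ← sum_add_distrib, ← sum_sub_distrib]
          exact sum_congr rfl fun i _ => by ring
      _ = _ := by rw [hV]; field_simp; ring
  simp only [hinner, ← mul_sum] at hsymm
  exact nonneg_of_mul_nonneg_right hsymm (by positivity)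

end WeightedAverages

section Vectors

theorem dot3_eq_inner (a b : Fin 3 → ℝ) : dot3 a b = ⟪toLp 2 a, toLp 2 b⟫_ℝ := by
  simp [dot3, PiLp.inner_apply, mul_comm]

theorem sq3_eq_sq_norm (a : Fin 3 → ℝ) : sq3 a = ‖toLp 2 a‖ ^ 2 := by
  rw [sq3, dot3_eq_inner, real_inner_self_eq_norm_sq]

theorem norm3_eq_norm (a : Fin 3 → ℝ) : norm3 a = ‖toLp 2 a‖ := by
  rw [norm3, sq3_eq_sq_norm, Real.sqrt_sq (norm_nonneg _)]

theorem sq3_nonneg (a : Fin 3 → ℝ) : 0 ≤ sq3 a := sq3_eq_sq_norm a ▸ sq_nonneg _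

theorem norm3_nonneg (a : Fin 3 → ℝ) : 0 ≤ norm3 a := Real.sqrt_nonneg _

theorem norm3_sub_comm (a b : Fin 3 → ℝ) : norm3 (a - b) = norm3 (b - a) := by
  rw [norm3_eq_norm, norm3_eq_norm, WithLp.toLp_sub, WithLp.toLp_sub, norm_sub_rev]

variable {d : ℕ} (hd : d ≤ 3)

/-- The direction `ξ ∈ ℝ^d` padded with zeros to a vector of Euclidean `ℝ³`. -/
def padDir (ξ : Fin d → ℝ) : EuclideanSpace ℝ (Fin 3) :=
  toLp 2 (Function.extend (Fin.castLE hd) ξ 0)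

theorem padDir_castLE (ξ : Fin d → ℝ) (k : Fin d) : padDir hd ξ (Fin.castLE hd k) = ξ k :=
  (Fin.castLE_injective hd).extend_apply ξ 0 k

theorem padDir_eq_zero (ξ : Fin d → ℝ) {i : Fin 3} (hi : i ∉ Set.range (Fin.castLE hd)) :
    padDir hd ξ i = 0 :=
  Function.extend_apply' ξ (0 : Fin 3 → ℝ) i hi

theorem dirDot_eq_inner (ξ : Fin d → ℝ) (w : Fin 3 → ℝ) :
    dirDot hd ξ w = ⟪padDir hd ξ, toLp 2 w⟫_ℝ := by
  rw [dirDot, PiLp.inner_apply]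
  refine Fintype.sum_of_injective _ (Fin.castLE_injective hd) _ _ (fun i hi => ?_) fun k => ?_
  · simp [padDir_eq_zero hd ξ hi]
  · simp [padDir_castLE, mul_comm]

theorem sq_norm_padDir (ξ : Fin d → ℝ) : ‖padDir hd ξ‖ ^ 2 = ∑ k, ξ k ^ 2 := by
  rw [EuclideanSpace.real_norm_sq_eq]
  refine (Fintype.sum_of_injective _ (Fin.castLE_injective hd) _ _ (fun i hi => ?_) ?_).symm
  · simp [padDir_eq_zero hd ξ hi]
  · exact fun k => by rw [padDir_castLE]

theorem norm_padDir_le_one {ξ : Fin d → ℝ} (hξ : ∑ k, ξ k ^ 2 ≤ 1) : ‖padDir hd ξ‖ ≤ 1 :=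
  (sq_le_one_iff₀ (norm_nonneg _)).1 (sq_norm_padDir hd ξ ▸ hξ)

theorem padDir_sub (ξ ζ : Fin d → ℝ) : padDir hd (ξ - ζ) = padDir hd ξ - padDir hd ζ := by
  ext i
  by_cases hi : i ∈ Set.range (Fin.castLE hd)
  · obtain ⟨k, rfl⟩ := hi
    simp only [PiLp.sub_apply, padDir_castLE, Pi.sub_apply]
  · simp only [PiLp.sub_apply, padDir_eq_zero hd _ hi, sub_zero]

theorem dirDot_sub_left (ξ ζ : Fin d → ℝ) (w : Fin 3 → ℝ) :
    dirDot hd (ξ - ζ) w = dirDot hd ξ w - dirDot hd ζ w := by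
  simp only [dirDot, Pi.sub_apply, sub_mul, sum_sub_distrib]

theorem dirDot_sub_right (ξ : Fin d → ℝ) (w z : Fin 3 → ℝ) :
    dirDot hd ξ (w - z) = dirDot hd ξ w - dirDot hd ξ z := by
  simp only [dirDot, Pi.sub_apply, mul_sub, sum_sub_distrib]

theorem sum_mul_dirDot_eq_zero {ι : Type*} [Fintype ι] {s : ι → ℝ} {ξ : ι → Fin d → ℝ}
    (hsum : ∑ j, s j • ξ j = 0) (w : Fin 3 → ℝ) : ∑ j, s j * dirDot hd (ξ j) w = 0 :=
  calc ∑ j, s j * dirDot hd (ξ j) w = dirDot hd (∑ j, s j • ξ j) w := by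
        simp only [dirDot, Finset.sum_apply, Pi.smul_apply, smul_eq_mul, sum_mul, mul_sum,
          mul_assoc]
        exact sum_comm
    _ = 0 := by simp only [hsum, dirDot, Pi.zero_apply, zero_mul, sum_const_zero]

theorem dot8_sum_smul {ι : Type*} [Fintype ι] (c : ι → ℝ) (V : ι → MHDState) (W : MHDState) :
    dot8 (∑ i, c i • V i) W = ∑ i, c i * dot8 (V i) W := by
  simp only [dot8, Finset.sum_apply, Pi.smul_apply, smul_eq_mul, sum_mul, mul_sum, mul_assoc]
  exact sum_comm

theorem dot8_smul (c : ℝ) (V W : MHDState) : dot8 (c • V) W = c * dot8 V W := by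
  simp only [dot8, Pi.smul_apply, smul_eq_mul, mul_sum, mul_assoc]

theorem dot8_add (V V' W : MHDState) : dot8 (V + V') W = dot8 V W + dot8 V' W := by
  simp only [dot8, Pi.add_apply, add_mul, sum_add_distrib]

theorem dot8_sub (V V' W : MHDState) : dot8 (V - V') W = dot8 V W - dot8 V' W := by
  simp only [dot8, Pi.sub_apply, sub_mul, sum_sub_distrib]

theorem dot8_mk_nstar (ρ E : ℝ) (m B vs Bs : Fin 3 → ℝ) :
    dot8 (mk ρ m B E) (nstar vs Bs) = ρ * (sq3 vs / 2) - dot3 m vs - dot3 B Bs + E := by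
  simp only [dot8, nstar, mk, dot3, Fin.sum_univ_eight, Fin.sum_univ_three, Matrix.cons_val]
  ring

end Vectors

section States

variable {U : MHDState} (vs Bs : Fin 3 → ℝ)

theorem mom_eq_smul_vel (hρ : dens U ≠ 0) : mom U = dens U • vel U := by
  ext k
  simp only [Pi.smul_apply, smul_eq_mul, vel, mul_div_cancel₀ _ hρ]

theorem toten_eq (hρ : dens U ≠ 0) :
    toten U = intE U + (dens U * sq3 (vel U) + sq3 (magB U)) / 2 := by
  simp only [intE, mom_eq_smul_vel hρ, sq3, dot3, Fin.sum_univ_three, Pi.smul_apply, smul_eq_mul]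
  field_simp
  ring

theorem dot8_nstar (hρ : dens U ≠ 0) :
    dot8 U (nstar vs Bs) =
      dens U * (sq3 vs / 2) - dens U * dot3 (vel U) vs - dot3 (magB U) Bs + toten U := by
  have hmk : U = mk (dens U) (mom U) (magB U) (toten U) := by
    ext i
    fin_cases i <;> rfl
  conv_lhs => rw [hmk, dot8_mk_nstar, mom_eq_smul_vel hρ]
  simp only [dot3, Pi.smul_apply, smul_eq_mul, mul_sum, mul_assoc]

theorem thetaSq_eq (hU : U ∈ Gset) :
    thetaSq U vs Bs =
      (dens U * sq3 (vel U - vs) + (2 * intE U + sq3 (magB U - Bs))) / 2 := by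
  have hE : 0 ≤ 2 * intE U := by linarith [hU.2]
  simp only [thetaSq, theta, sq3, dot3, Fin.sum_univ_seven, Fin.sum_univ_three, Matrix.cons_val,
    Pi.sub_apply, div_pow, mul_pow, Real.sq_sqrt hU.1.le, Real.sq_sqrt hE,
    Real.sq_sqrt zero_le_two]
  ring

theorem dot8_nstar_add_eq_thetaSq (hU : U ∈ Gset) :
    dot8 U (nstar vs Bs) + sq3 Bs / 2 = thetaSq U vs Bs := by
  rw [dot8_nstar vs Bs hU.1.ne', toten_eq hU.1.ne', thetaSq_eq vs Bs hU]
  simp only [dot3, sq3, Fin.sum_univ_three, Pi.sub_apply]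
  ring

theorem thetaSq_nonneg : 0 ≤ thetaSq U vs Bs := sum_nonneg fun _ _ => sq_nonneg _

theorem half_sq3_magB_sub_le_thetaSq (hU : U ∈ Gset) :
    sq3 (magB U - Bs) / 2 ≤ thetaSq U vs Bs := by
  rw [thetaSq_eq vs Bs hU]
  linarith [hU.2, mul_nonneg hU.1.le (sq3_nonneg (vel U - vs))]

theorem mem_closure_GstarSet (hρ : 0 < dens U)
    (h : ∀ vs Bs : Fin 3 → ℝ, 0 ≤ dot8 U (nstar vs Bs) + sq3 Bs / 2) : U ∈ closure GstarSet := by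
  -- adding total energy `t > 0` makes the inequalities strict
  let V : ℝ → MHDState := fun t => U + t • mk 0 0 0 1
  have hV : ContinuousWithinAt V (Set.Ioi 0) 0 := by fun_prop
  have hV0 : V 0 = U := by simp only [V, zero_smul, add_zero]
  rw [← hV0]
  refine mem_closure_of_tendsto hV ?_
  filter_upwards [self_mem_nhdsWithin] with t (ht : 0 < t)
  have hdens : dens (V t) = dens U := by
    change U 0 + t * 0 = U 0
    ring
  refine ⟨hdens ▸ hρ, fun vs Bs => ?_⟩
  have hdot : dot8 (V t) (nstar vs Bs) = dot8 U (nstar vs Bs) + t := by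
    simp [V, dot8_add, dot8_smul, dot8_mk_nstar, dot3]
  linarith [h vs Bs]

end States

section Flux

variable (pfun : ℝ → ℝ → ℝ) {d : ℕ} (hd : d ≤ 3) (ξ : Fin d → ℝ) {U : MHDState}

theorem dens_dirFlux (U : MHDState) :
    dens (dirFlux pfun hd ξ U) = dens U * dirDot hd ξ (vel U) := by
  simp only [dens, dirFlux, Finset.sum_apply, Pi.smul_apply, smul_eq_mul, dirDot, mul_sum]
  refine sum_congr rfl fun k _ => ?_
  simp only [flux, mk, dens, Matrix.cons_val_zero]
  ring

theorem dot8_flux_nstar (hρ : dens U ≠ 0) (vs Bs : Fin 3 → ℝ) (i : Fin 3) :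
    dot8 (flux pfun i U) (nstar vs Bs) =
      vel U i * dot8 U (nstar vs Bs) + ptot pfun U * (vel U - vs) i
        - magB U i * (dot3 (vel U - vs) (magB U - Bs) - dot3 vs Bs) := by
  rw [flux, dot8_mk_nstar, dot8_nstar vs Bs hρ]
  simp only [dot3, Pi.sub_apply, mul_ite, mul_one, mul_zero, Fin.sum_univ_three]
  fin_cases i <;>
    simp only [Fin.zero_eta, Fin.mk_one, Fin.reduceFinMk, Fin.reduceEq, ↓reduceIte] <;>
    ring

theorem dot8_dirFlux_nstar (hρ : dens U ≠ 0) (vs Bs : Fin 3 → ℝ) :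
    dot8 (dirFlux pfun hd ξ U) (nstar vs Bs) =
      dirDot hd ξ (vel U) * dot8 U (nstar vs Bs) + ptot pfun U * dirDot hd ξ (vel U - vs)
        - dirDot hd ξ (magB U) * (dot3 (vel U - vs) (magB U - Bs) - dot3 vs Bs) := by
  simp only [dirFlux, dot8_sum_smul, dot8_flux_nstar pfun hρ, dirDot, sum_mul, mul_sum,
    ← sum_add_distrib, ← sum_sub_distrib]
  exact sum_congr rfl fun k _ => by ring

theorem waveC_eq_fastSpeed (hρ : 0 ≤ dens U) :
    waveC pfun hd ξ U =
      fastSpeed (soundC pfun U) (padDir hd ξ) ((√(dens U))⁻¹ • toLp 2 (magB U)) := by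
  simp only [waveC, fastSpeed, norm_smul, mul_pow, real_inner_smul_right, ← dirDot_eq_inner,
    ← sq3_eq_sq_norm, norm_inv, Real.norm_eq_abs, inv_pow, sq_abs, Real.sq_sqrt hρ]
  ring_nf

theorem pres_eq_soundC_mul (hU : U ∈ Gset) :
    pres pfun U = soundC pfun U * √(dens U) * √(2 * intE U) := by
  have hr : √(dens U) ≠ 0 := (Real.sqrt_pos.2 hU.1).ne'
  have hE : √(2 * intE U) ≠ 0 := (Real.sqrt_pos.2 (mul_pos two_pos hU.2)).ne'
  have hden : dens U * √(2 * specE U) = √(dens U) * √(2 * intE U) := by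
    rw [specE, ← mul_div_assoc, Real.sqrt_div' _ hU.1.le, mul_div_left_comm, Real.div_sqrt,
      mul_comm]
  rw [soundC, hden, mul_assoc, div_mul_cancel₀ _ (mul_ne_zero hr hE)]

theorem waveC_pos {pfun : ℝ → ℝ → ℝ} (hp : pres pfun U ≠ 0) (hU : U ∈ Gset) :
    0 < waveC pfun hd ξ U := by
  rw [pres_eq_soundC_mul pfun hU] at hp
  rw [waveC_eq_fastSpeed pfun hd ξ hU.1.le]
  exact fastSpeed_pos (left_ne_zero_of_mul (left_ne_zero_of_mul hp)) _ _

theorem waveC_nonneg (U : MHDState) : 0 ≤ waveC pfun hd ξ U := Real.sqrt_nonneg _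

variable {ξ}

theorem pressure_magnetic_coupling_le (hξ : ∑ k, ξ k ^ 2 ≤ 1) (hU : U ∈ Gset)
    (vs Bs : Fin 3 → ℝ) :
    pres pfun U * dirDot hd ξ (vel U - vs)
        + (dirDot hd ξ (vel U - vs) * dot3 (magB U) (magB U - Bs)
          - dirDot hd ξ (magB U) * dot3 (vel U - vs) (magB U - Bs))
      ≤ waveC pfun hd ξ U * thetaSq U vs Bs := by
  have hr : √(dens U) ≠ 0 := (Real.sqrt_pos.2 hU.1).ne'
  have hE : 0 ≤ 2 * intE U := by linarith [hU.2]
  have hcoupling := magnetosonic_coupling_le (soundC pfun U) (norm_padDir_le_one hd hξ)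
    ((√(dens U))⁻¹ • toLp 2 (magB U)) (√(dens U) • toLp 2 (vel U - vs)) √(2 * intE U)
    (toLp 2 (magB U - Bs))
  rw [← waveC_eq_fastSpeed pfun hd ξ hU.1.le] at hcoupling
  simp only [norm_smul, mul_pow, Real.norm_eq_abs, sq_abs, Real.sq_sqrt hU.1.le, Real.sq_sqrt hE,
    real_inner_smul_left, real_inner_smul_right, inner_sub_left, ← dirDot_eq_inner,
    ← dot3_eq_inner, ← sq3_eq_sq_norm, ← thetaSq_eq vs Bs hU] at hcoupling
  refine le_of_eq_of_le ?_ hcoupling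
  rw [pres_eq_soundC_mul pfun hU]
  field_simp

theorem dot8_dirFlux_nstar_le (hξ : ∑ k, ξ k ^ 2 ≤ 1) (hU : U ∈ Gset) (vs Bs : Fin 3 → ℝ) :
    dot8 (dirFlux pfun hd ξ U) (nstar vs Bs) ≤
      dirDot hd ξ (vel U) * (thetaSq U vs Bs - sq3 (magB U - Bs) / 2)
        + waveC pfun hd ξ U * thetaSq U vs Bs
        + dirDot hd ξ vs * ((sq3 (magB U - Bs) - sq3 Bs) / 2)
        + dirDot hd ξ (magB U) * dot3 vs Bs := by
  have hdot := eq_sub_of_add_eq (dot8_nstar_add_eq_thetaSq vs Bs hU)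
  have hpolar : sq3 (magB U) - sq3 Bs =
      2 * dot3 (magB U) (magB U - Bs) - sq3 (magB U - Bs) := by
    simp only [sq3, dot3, Fin.sum_univ_three, Pi.sub_apply]
    ring
  have hcoupling := pressure_magnetic_coupling_le pfun hd hξ hU vs Bs
  rw [dot8_dirFlux_nstar pfun hd ξ hU.1.ne', hdot, ptot]
  rw [dirDot_sub_right] at hcoupling ⊢
  linear_combination hcoupling + (dirDot hd ξ (vel U) - dirDot hd ξ vs) / 2 * hpolar

theorem le_dot8_smul_sub_dirFlux {a α δ : ℝ} (hξ : ∑ k, ξ k ^ 2 ≤ 1) (hU : U ∈ Gset)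
    (hα : max (dirDot hd ξ (vel U)) a + waveC pfun hd ξ U + δ ≤ α) (vs Bs : Fin 3 → ℝ) :
    (a - dirDot hd ξ vs) * (sq3 (magB U - Bs) / 2) + δ * thetaSq U vs Bs
        + dirDot hd ξ vs * (sq3 Bs / 2) - dirDot hd ξ (magB U) * dot3 vs Bs ≤
      dot8 (α • U - dirFlux pfun hd ξ U) (nstar vs Bs) + α * (sq3 Bs / 2) := by
  have hflux := dot8_dirFlux_nstar_le pfun hd hξ hU vs Bs
  have hdot := eq_sub_of_add_eq (dot8_nstar_add_eq_thetaSq vs Bs hU)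
  have htransport := mul_le_mul_of_nonneg_right (le_max_left (dirDot hd ξ (vel U)) a)
    (sub_nonneg.2 (half_sq3_magB_sub_le_thetaSq vs Bs hU))
  have hfield := mul_le_mul_of_nonneg_right (le_max_right (dirDot hd ξ (vel U)) a)
    (div_nonneg (sq3_nonneg (magB U - Bs)) two_pos.le)
  have htheta := mul_le_mul_of_nonneg_right hα (thetaSq_nonneg (U := U) vs Bs)
  rw [dot8_sub, dot8_smul, hdot]
  linarith

end Flux

section RoeAverage

variable {U U' : MHDState}

theorem roeV_comm (U U' : MHDState) : roeV U U' = roeV U' U := by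
  ext k
  rw [roeV, roeV, add_comm, add_comm √(dens U)]

theorem toLp_sub_roeV (hU : 0 < dens U) (vs : Fin 3 → ℝ) :
    toLp 2 (roeV U U' - vs) = (√(dens U) + √(dens U'))⁻¹ •
      (√(dens U) • toLp 2 (vel U - vs) + √(dens U') • toLp 2 (vel U' - vs)) := by
  have hr : √(dens U) + √(dens U') ≠ 0 := by
    have := Real.sqrt_pos.2 hU
    positivity
  ext k
  simp only [roeV, PiLp.smul_apply, PiLp.add_apply, Pi.sub_apply, smul_eq_mul]
  field_simp
  ring

variable {d : ℕ} (hd : d ≤ 3)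

theorem dirDot_sub_roeV_antisymm (ξ ξ' : Fin d → ℝ) (U U' : MHDState) :
    dirDot hd (ξ - ξ') (roeV U U') = -dirDot hd (ξ' - ξ) (roeV U' U) := by
  rw [roeV_comm, dirDot_sub_left, dirDot_sub_left, neg_sub]

theorem dirDot_sub_roeV_mul_le (ζ : Fin d → ℝ) (hU : U ∈ Gset) (hU' : U' ∈ Gset)
    (vs Bs : Fin 3 → ℝ) :
    (dirDot hd ζ vs - dirDot hd ζ (roeV U U')) * (sq3 (magB U - Bs) - sq3 (magB U' - Bs)) ≤
      ‖padDir hd ζ‖ * (norm3 (magB U - magB U') / (√(dens U) + √(dens U'))) *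
        (2 * (thetaSq U vs Bs + thetaSq U' vs Bs)) := by
  set r := √(dens U) + √(dens U')
  set u := √(dens U) • toLp 2 (vel U - vs) with hu
  set u' := √(dens U') • toLp 2 (vel U' - vs) with hu'
  have hθ : ‖u‖ ^ 2 + ‖u'‖ ^ 2 + (‖toLp 2 (magB U - Bs)‖ ^ 2 + ‖toLp 2 (magB U' - Bs)‖ ^ 2) ≤
      2 * (thetaSq U vs Bs + thetaSq U' vs Bs) := by
    simp only [hu, hu', norm_smul, mul_pow, Real.norm_eq_abs, sq_abs, Real.sq_sqrt hU.1.le,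
      Real.sq_sqrt hU'.1.le, ← sq3_eq_sq_norm, thetaSq_eq vs Bs hU, thetaSq_eq vs Bs hU']
    linarith [hU.2, hU'.2]
  have hjump : norm3 (magB U - magB U') = ‖toLp 2 (magB U - Bs) - toLp 2 (magB U' - Bs)‖ := by
    rw [← WithLp.toLp_sub, sub_sub_sub_cancel_right, norm3_eq_norm]
  calc (dirDot hd ζ vs - dirDot hd ζ (roeV U U')) * (sq3 (magB U - Bs) - sq3 (magB U' - Bs))
      = -(⟪padDir hd ζ, u + u'⟫_ℝ *
          (‖toLp 2 (magB U - Bs)‖ ^ 2 - ‖toLp 2 (magB U' - Bs)‖ ^ 2)) / r := by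
        rw [← neg_sub (dirDot hd ζ (roeV U U')), ← dirDot_sub_right, dirDot_eq_inner,
          toLp_sub_roeV hU.1 vs, real_inner_smul_right, sq3_eq_sq_norm, sq3_eq_sq_norm]
        ring
    _ ≤ ‖padDir hd ζ‖ * norm3 (magB U - magB U') *
          (2 * (thetaSq U vs Bs + thetaSq U' vs Bs)) / r := by
        gcongr
        refine (neg_le_abs _).trans ((abs_inner_mul_sq_norm_sub_le _ _ _ _ _).trans ?_)
        rw [← hjump]
        exact mul_le_mul_of_nonneg_left hθ (mul_nonneg (norm_nonneg _) (norm3_nonneg _))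
    _ = _ := by ring

theorem roe_pair_estimate {ξ ξ' : Fin d → ℝ} (hξ : ∑ k, ξ k ^ 2 ≤ 1) (hξ' : ∑ k, ξ' k ^ 2 ≤ 1)
    (hU : U ∈ Gset) (hU' : U' ∈ Gset) (vs Bs : Fin 3 → ℝ) :
    (dirDot hd ξ vs - dirDot hd ξ' vs - dirDot hd (ξ - ξ') (roeV U U')) *
        (sq3 (magB U - Bs) - sq3 (magB U' - Bs)) ≤
      4 * (norm3 (magB U - magB U') / (√(dens U) + √(dens U'))) *
        (thetaSq U vs Bs + thetaSq U' vs Bs) := by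
  have hdiam : ‖padDir hd (ξ - ξ')‖ ≤ 2 := by
    rw [padDir_sub]
    linarith [norm_sub_le (padDir hd ξ) (padDir hd ξ'), norm_padDir_le_one hd hξ,
      norm_padDir_le_one hd hξ']
  have hnonneg : 0 ≤ norm3 (magB U - magB U') / (√(dens U) + √(dens U')) *
      (thetaSq U vs Bs + thetaSq U' vs Bs) :=
    mul_nonneg (div_nonneg (norm3_nonneg _) (by positivity))
      (add_nonneg (thetaSq_nonneg vs Bs) (thetaSq_nonneg vs Bs))
  rw [← dirDot_sub_left]
  linarith [dirDot_sub_roeV_mul_le hd (ξ - ξ') hU hU' vs Bs,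
    mul_le_mul_of_nonneg_right hdiam hnonneg]

end RoeAverage

section MultiState

section SpeedBounds

variable {ι : Type*} [Fintype ι] {d : ℕ} (hd : d ≤ 3) {s : ι → ℝ} (ξ : ι → Fin d → ℝ)
  (U : ι → MHDState)

/-- The weighted mean over `i` of the Roe-averaged speeds `⟨ξ⁽ʲ⁾ - ξ⁽ⁱ⁾, v̄⁽ʲⁱ⁾⟩`, which is the
second entry of the maximum in `α̂ⱼ`. -/
def roeSpeed (s : ι → ℝ) (ξ : ι → Fin d → ℝ) (U : ι → MHDState) (j : ι) : ℝ :=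
  (∑ i, s i)⁻¹ * ∑ i, s i * dirDot hd (ξ j - ξ i) (roeV (U j) (U i))

/-- The contribution to `α̂ⱼ` of the jumps `|B⁽ʲ⁾ - B⁽ⁱ⁾|` of the magnetic field. -/
def fieldJump (s : ι → ℝ) (U : ι → MHDState) (j : ι) : ℝ :=
  2 * (∑ i, s i)⁻¹ * ∑ i, s i *
    (norm3 (magB (U j) - magB (U i)) / (√(dens (U j)) + √(dens (U i))))

theorem sum_mul_roeSpeed (s : ι → ℝ) : ∑ j, s j * roeSpeed hd s ξ U j = 0 := by
  simp only [roeSpeed, mul_left_comm (s _), ← mul_sum]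
  rw [sum_mul_sum_eq_zero_of_antisymm s fun j i => dirDot_sub_roeV_antisymm hd (ξ j) (ξ i) _ _,
    mul_zero]

theorem fieldJump_nonneg (hs : ∀ j, 0 ≤ s j) (j : ι) : 0 ≤ fieldJump s U j :=
  mul_nonneg (mul_nonneg two_pos.le (inv_nonneg.2 (sum_nonneg fun i _ => hs i)))
    (sum_nonneg fun i _ => mul_nonneg (hs i) (div_nonneg (norm3_nonneg _) (by positivity)))

variable {ξ U}

theorem roe_field_balance (hs : ∀ j, 0 ≤ s j) (hS : 0 < ∑ j, s j)
    (hξ : ∀ j, ∑ k, ξ j k ^ 2 ≤ 1) (hsum : ∑ j, s j • ξ j = 0) (hU : ∀ j, U j ∈ Gset)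
    (vs Bs : Fin 3 → ℝ) :
    0 ≤ ∑ j, s j * ((roeSpeed hd s ξ U j - dirDot hd (ξ j) vs) * (sq3 (magB (U j) - Bs) / 2)
      + fieldJump s U j * thetaSq (U j) vs Bs) := by
  refine weighted_sum_nonneg_of_pairwise hs hS (sum_mul_dirDot_eq_zero hd hsum vs)
    (fun j i => dirDot_sub_roeV_antisymm hd (ξ j) (ξ i) _ _) (fun j i => ?_)
    fun j i => roe_pair_estimate hd (hξ j) (hξ i) (hU j) (hU i) vs Bs
  rw [norm3_sub_comm, add_comm]

end SpeedBounds

variable (pfun : ℝ → ℝ → ℝ) {d : ℕ} (hd : d ≤ 3) {N : ℕ} {s : Fin N → ℝ} {ξ : Fin N → Fin d → ℝ}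
  {U : Fin N → MHDState} {α : Fin N → ℝ}

theorem alphaHat_eq (s : Fin N → ℝ) (ξ : Fin N → Fin d → ℝ) (U : Fin N → MHDState) (j : Fin N) :
    alphaHat pfun hd s ξ U j =
      max (dirDot hd (ξ j) (vel (U j))) (roeSpeed hd s ξ U j) + waveC pfun hd (ξ j) (U j)
        + fieldJump s U j := rfl

theorem max_add_waveC_le_alphaHat (hs : ∀ j, 0 ≤ s j) (j : Fin N) :
    max (dirDot hd (ξ j) (vel (U j))) (roeSpeed hd s ξ U j) + waveC pfun hd (ξ j) (U j) ≤
      alphaHat pfun hd s ξ U j :=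
  alphaHat_eq pfun hd s ξ U j ▸ le_add_of_nonneg_right (fieldJump_nonneg U hs j)

theorem dirDot_vel_add_waveC_le_alphaHat (hs : ∀ j, 0 ≤ s j) (j : Fin N) :
    dirDot hd (ξ j) (vel (U j)) + waveC pfun hd (ξ j) (U j) ≤ alphaHat pfun hd s ξ U j :=
  (add_le_add_left (le_max_left _ _) _).trans (max_add_waveC_le_alphaHat pfun hd hs j)

theorem roeSpeed_add_waveC_le_alphaHat (hs : ∀ j, 0 ≤ s j) (j : Fin N) :
    roeSpeed hd s ξ U j + waveC pfun hd (ξ j) (U j) ≤ alphaHat pfun hd s ξ U j :=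
  (add_le_add_left (le_max_right _ _) _).trans (max_add_waveC_le_alphaHat pfun hd hs j)

/-- The state `Ū`, whose admissibility is at stake: the states `αⱼ U⁽ʲ⁾`, each diminished by its
directional flux, averaged with total weight `∑ⱼ sⱼ αⱼ`. -/
def averagedState (s : Fin N → ℝ) (ξ : Fin N → Fin d → ℝ) (U : Fin N → MHDState)
    (α : Fin N → ℝ) : MHDState :=
  (∑ j, s j * α j)⁻¹ • ∑ j, s j • (α j • U j - dirFlux pfun hd (ξ j) (U j))

theorem dens_averagedState (s : Fin N → ℝ) (ξ : Fin N → Fin d → ℝ) (U : Fin N → MHDState)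
    (α : Fin N → ℝ) :
    dens (averagedState pfun hd s ξ U α) =
      (∑ j, s j * α j)⁻¹ *
        ∑ j, s j * (dens (U j) * (α j - dirDot hd (ξ j) (vel (U j)))) := by
  change (∑ j, s j * α j)⁻¹ * (∑ j, s j • (α j • U j - dirFlux pfun hd (ξ j) (U j))) 0 = _
  rw [Finset.sum_apply]
  congr 1
  refine sum_congr rfl fun j _ => ?_
  change s j * (α j * dens (U j) - dens (dirFlux pfun hd (ξ j) (U j))) = _
  rw [dens_dirFlux]
  ring

variable {pfun}

theorem sum_mul_speed_pos (hs : ∀ j, 0 < s j) (hα : ∀ j, alphaHat pfun hd s ξ U j ≤ α j)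
    (hwave : ∃ j, 0 < waveC pfun hd (ξ j) (U j)) : 0 < ∑ j, s j * α j := by
  obtain ⟨i, hi⟩ := hwave
  have hgap (j : Fin N) : waveC pfun hd (ξ j) (U j) ≤ α j - roeSpeed hd s ξ U j := by
    linarith [hα j, roeSpeed_add_waveC_le_alphaHat (ξ := ξ) (U := U) pfun hd
      (fun k => (hs k).le) j]
  calc 0 < ∑ j, s j * waveC pfun hd (ξ j) (U j) :=
        sum_pos' (fun j _ => mul_nonneg (hs j).le (waveC_nonneg pfun hd (ξ j) (U j)))
          ⟨i, mem_univ i, mul_pos (hs i) hi⟩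
    _ ≤ ∑ j, s j * (α j - roeSpeed hd s ξ U j) :=
        sum_le_sum fun j _ => mul_le_mul_of_nonneg_left (hgap j) (hs j).le
    _ = ∑ j, s j * α j := by
        simp only [mul_sub, sum_sub_distrib, sum_mul_roeSpeed, sub_zero]

theorem averagedState_mem_Grho (hs : ∀ j, 0 < s j) (hU : ∀ j, U j ∈ Gset)
    (hα : ∀ j, alphaHat pfun hd s ξ U j ≤ α j) (hwave : ∃ j, 0 < waveC pfun hd (ξ j) (U j)) :
    averagedState pfun hd s ξ U α ∈ Grho := by
  have hgap (j : Fin N) :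
      waveC pfun hd (ξ j) (U j) ≤ α j - dirDot hd (ξ j) (vel (U j)) := by
    linarith [hα j, dirDot_vel_add_waveC_le_alphaHat (ξ := ξ) (U := U) pfun hd
      (fun k => (hs k).le) j]
  have hA := sum_mul_speed_pos hd hs hα hwave
  obtain ⟨i, hi⟩ := hwave
  change 0 < dens _
  rw [dens_averagedState]
  exact mul_pos (inv_pos.2 hA) <| sum_pos'
    (fun j _ => mul_nonneg (hs j).le
      (mul_nonneg (hU j).1.le ((waveC_nonneg pfun hd (ξ j) (U j)).trans (hgap j))))
    ⟨i, mem_univ i, mul_pos (hs i) (mul_pos (hU i).1 (hi.trans_le (hgap i)))⟩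

theorem neg_mul_sum_le_sum_dot8 (hs : ∀ j, 0 ≤ s j) (hS : 0 < ∑ j, s j)
    (hξ : ∀ j, ∑ k, ξ j k ^ 2 ≤ 1) (hsum : ∑ j, s j • ξ j = 0) (hU : ∀ j, U j ∈ Gset)
    (hα : ∀ j, alphaHat pfun hd s ξ U j ≤ α j) (vs Bs : Fin 3 → ℝ) :
    -(dot3 vs Bs * ∑ j, s j * dirDot hd (ξ j) (magB (U j))) ≤
      ∑ j, s j * dot8 (α j • U j - dirFlux pfun hd (ξ j) (U j)) (nstar vs Bs)
        + (∑ j, s j * α j) * (sq3 Bs / 2) := by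
  have hstates := sum_le_sum fun j (_ : j ∈ univ) => mul_le_mul_of_nonneg_left
    (le_dot8_smul_sub_dirFlux pfun hd (hξ j) (hU j) (alphaHat_eq pfun hd s ξ U j ▸ hα j) vs Bs)
    (hs j)
  have hbalance := roe_field_balance hd hs hS hξ hsum hU vs Bs
  simp only [mul_sub, mul_add, sum_add_distrib, sum_sub_distrib, ← mul_assoc, ← sum_mul,
    sum_mul_dirDot_eq_zero hd hsum vs] at hstates hbalance ⊢
  linarith

theorem neg_mul_sum_le_dot8_averagedState (hs : ∀ j, 0 ≤ s j) (hS : 0 < ∑ j, s j)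
    (hξ : ∀ j, ∑ k, ξ j k ^ 2 ≤ 1) (hsum : ∑ j, s j • ξ j = 0) (hU : ∀ j, U j ∈ Gset)
    (hα : ∀ j, alphaHat pfun hd s ξ U j ≤ α j) (hA : 0 < ∑ j, s j * α j) (vs Bs : Fin 3 → ℝ) :
    -(dot3 vs Bs * (∑ j, s j * α j)⁻¹ * ∑ j, s j * dirDot hd (ξ j) (magB (U j))) ≤
      dot8 (averagedState pfun hd s ξ U α) (nstar vs Bs) + sq3 Bs / 2 := by
  have h := mul_le_mul_of_nonneg_left
    (neg_mul_sum_le_sum_dot8 hd hs hS hξ hsum hU hα vs Bs) (inv_nonneg.2 hA.le)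
  rw [mul_add, inv_mul_cancel_left₀ hA.ne'] at h
  rw [averagedState, dot8_smul, dot8_sum_smul]
  linarith

theorem multi_state_estimate_general (hs : ∀ j, 0 < s j) (hξ : ∀ j, ∑ k, ξ j k ^ 2 ≤ 1)
    (hsum : ∑ j, s j • ξ j = 0) (hU : ∀ j, U j ∈ Gset)
    (hα : ∀ j, alphaHat pfun hd s ξ U j ≤ α j) (hwave : ∃ j, 0 < waveC pfun hd (ξ j) (U j)) :
    0 < ∑ j, s j * α j ∧ averagedState pfun hd s ξ U α ∈ Grho ∧
      (∀ vs Bs : Fin 3 → ℝ,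
        dot8 (averagedState pfun hd s ξ U α) (nstar vs Bs) + sq3 Bs / 2 ≥
          -(dot3 vs Bs * (∑ j, s j * α j)⁻¹ * ∑ j, s j * dirDot hd (ξ j) (magB (U j)))) ∧
      (∑ j, s j * dirDot hd (ξ j) (magB (U j)) = 0 →
        averagedState pfun hd s ξ U α ∈ closure GstarSet) := by
  have hS : 0 < ∑ j, s j := hwave.elim fun i _ => sum_pos (fun j _ => hs j) ⟨i, mem_univ i⟩
  have hA := sum_mul_speed_pos hd hs hα hwave
  have hρ := averagedState_mem_Grho hd hs hU hα hwave
  have hmain :=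
    neg_mul_sum_le_dot8_averagedState hd (fun j => (hs j).le) hS hξ hsum hU hα hA
  refine ⟨hA, hρ, hmain, fun hB => mem_closure_GstarSet hρ fun vs Bs => ?_⟩
  simpa only [hB, mul_zero, neg_zero] using hmain vs Bs

end MultiState

/-- Theorem 2.3 (multi-state estimate). -/
theorem multi_state_estimate (pfun : ℝ → ℝ → ℝ) (hEOS : IsEOS pfun)
    {d : ℕ} (hd1 : 1 ≤ d) (hd : d ≤ 3) {N : ℕ} (hN : 1 ≤ N)
    (s : Fin N → ℝ) (hs : ∀ j, 0 < s j)
    (ξ : Fin N → Fin d → ℝ) (hξ : ∀ j, unitVec (ξ j))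
    (hsum : (∑ j, s j • ξ j) = 0)
    (U : Fin N → MHDState) (hU : ∀ j, U j ∈ Gset)
    (α : Fin N → ℝ) (hα : ∀ j, alphaHat pfun hd s ξ U j ≤ α j) :
    0 < (∑ j, s j * α j) ∧
      ∀ Ubar : MHDState,
        Ubar = (∑ j, s j * α j)⁻¹ •
            (∑ j, s j • (α j • U j - dirFlux pfun hd (ξ j) (U j))) →
        Ubar ∈ Grho ∧
          (∀ vs Bs : Fin 3 → ℝ,
            dot8 Ubar (nstar vs Bs) + sq3 Bs / 2 ≥
              -(dot3 vs Bs * (∑ j, s j * α j)⁻¹ *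
                (∑ j, s j * dirDot hd (ξ j) (magB (U j))))) ∧
          ((∑ j, s j * dirDot hd (ξ j) (magB (U j))) = 0 → Ubar ∈ closure GstarSet) := by
  have hp (j : Fin N) : pres pfun (U j) ≠ 0 :=
    ((hEOS _ _ (hU j).1).1 (div_pos (hU j).2 (hU j).1)).ne'
  obtain ⟨hA, h⟩ := multi_state_estimate_general hd hs (fun j => (hξ j).le) hsum hU hα
    ⟨⟨0, hN⟩, waveC_pos hd _ (hp _) (hU _)⟩
  exact ⟨hA, fun _ hUbar => hUbar ▸ h⟩

end MHD
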